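/- arXiv:2311.03665 — 9 statements merged into one kernel-verified Lean document; each statement's English description precedes it below -/
import Mathlib

section
/- Let G be a finite simple graph and k a natural number. Suppose (I, H, M) is a crown for the triangles of G, i.e.: I is a set of vertices of G such that no triangle of G contains two distinct vertices of I; H is exactly the set of edges of G that form a triangle together with some vertex of I; and M is an injective map from H to I such that for every edge uv in H, the vertex M(uv) is adjacent to both u and v (so {M(uv), u, v} is a triangle of G). If G has a triangle hitting set of size at most k, then G has a triangle hitting set F' of size at most k such that F' is disjoint from I and F' contains at least one endpoint of every edge of H. -/
/-- If `(I, H, M)` is a crown for the triangles of `G` and `G` has a triangle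
hitting set of size at most `k`, then `G` has a triangle hitting set `F'` of size at most `k`
that is disjoint from `I` and contains an endpoint of every edge of `H`. -/
theorem crown_reduction {V : Type*} [Fintype V] [DecidableEq V] (G : SimpleGraph V)
    (k : ℕ) (I : Finset V) (H : Finset (Sym2 V)) (M : Sym2 V → V)
    (hI : ∀ t : Finset V, G.IsNClique 3 t → ∀ x ∈ I, ∀ y ∈ I, x ∈ t → y ∈ t → x = y)
    (hH : ∀ e : Sym2 V, e ∈ H ↔ e ∈ G.edgeSet ∧ ∃ x ∈ I, ∀ w ∈ e, G.Adj x w)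
    (hMinj : Set.InjOn M ↑H)
    (hMI : ∀ e ∈ H, M e ∈ I)
    (hMadj : ∀ e ∈ H, ∀ w ∈ e, G.Adj (M e) w)
    (hhit : ∃ F : Finset V, F.card ≤ k ∧
      ∀ t : Finset V, G.IsNClique 3 t → ∃ v ∈ t, v ∈ F) :
    ∃ F' : Finset V, F'.card ≤ k ∧
      (∀ t : Finset V, G.IsNClique 3 t → ∃ v ∈ t, v ∈ F') ∧
      (∀ v ∈ F', v ∉ I) ∧
      (∀ e ∈ H, ∃ w ∈ e, w ∈ F') := by
  classical
  obtain ⟨F, hFk, hF⟩ := hhit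
  have hnI : ∀ e ∈ H, ∀ w ∈ e, w ∉ I := by
    intro e he w hw hwI
    obtain ⟨hE, x, hx, hadj⟩ := (hH e).1 he
    obtain ⟨u, rfl⟩ := hw
    rw [SimpleGraph.mem_edgeSet] at hE
    have h1 := hadj w (by simp)
    have h2 := hadj u (by simp)
    have ht : G.IsNClique 3 {x, w, u} := SimpleGraph.is3Clique_triple_iff.2 ⟨h1, h2, hE⟩
    have := hI _ ht x hx w hwI (by simp) (by simp)
    exact h1.ne this
  let B : Finset (Sym2 V) := H.filter (fun e => ∀ w ∈ e, w ∉ F)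
  have hB : ∀ e ∈ B, M e ∈ F ∩ I := by
    intro e he
    obtain ⟨he, hw⟩ := Finset.mem_filter.1 he
    refine Finset.mem_inter.2 ⟨?_, hMI e he⟩
    have hE := ((hH e).1 he).1
    have hadj := hMadj e he
    induction e using Sym2.ind with
    | _ a b =>
      rw [SimpleGraph.mem_edgeSet] at hE
      have ht : G.IsNClique 3 {M s(a, b), a, b} :=
        SimpleGraph.is3Clique_triple_iff.2 ⟨hadj a (by simp), hadj b (by simp), hE⟩
      obtain ⟨v, hv, hvF⟩ := hF _ ht
      simp only [Finset.mem_insert, Finset.mem_singleton] at hv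
      rcases hv with hv | hv | hv
      · exact hv ▸ hvF
      · exact absurd hvF (hw v (by simp [hv]))
      · exact absurd hvF (hw v (by simp [hv]))
  have hcard : B.card ≤ (F ∩ I).card := by
    apply Finset.card_le_card_of_injOn M hB
    intro a ha b hb hab
    exact hMinj (Finset.mem_filter.1 ha).1 (Finset.mem_filter.1 hb).1 hab
  have hcov : ∀ e ∈ H, ∃ w ∈ e, w ∈ (F \ I) ∪ B.image (fun e => e.out.1) := by
    intro e he
    by_cases h : ∀ w ∈ e, w ∉ F
    · exact ⟨e.out.1, Sym2.out_fst_mem e, Finset.mem_union_right _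
        (Finset.mem_image_of_mem (fun e : Sym2 V => e.out.1) (Finset.mem_filter.2 ⟨he, h⟩))⟩
    · push Not at h
      obtain ⟨w, hw, hwF⟩ := h
      exact ⟨w, hw, Finset.mem_union_left _ (Finset.mem_sdiff.2 ⟨hwF, hnI e he w hw⟩)⟩
  refine ⟨(F \ I) ∪ B.image (fun e => e.out.1), ?_, ?_, ?_, hcov⟩
  · have h1 := Finset.card_union_le (F \ I) (B.image (fun e => e.out.1))
    have h2 : (B.image (fun e => e.out.1)).card ≤ B.card := Finset.card_image_le
    have h3 := Finset.card_sdiff_add_card_inter F I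
    omega
  · intro t ht
    obtain ⟨v, hvt, hvF⟩ := hF t ht
    by_cases hvI : v ∈ I
    · have hc : (t.erase v).card = 2 := by
        rw [Finset.card_erase_of_mem hvt, ht.card_eq]
      obtain ⟨a, b, hab, hEq⟩ := Finset.card_eq_two.1 hc
      have ha : a ∈ t.erase v := by simp [hEq]
      have hb : b ∈ t.erase v := by simp [hEq]
      obtain ⟨hav, hat⟩ := Finset.mem_erase.1 ha
      obtain ⟨hbv, hbt⟩ := Finset.mem_erase.1 hb
      have he : s(a, b) ∈ H := by
        refine (hH _).2 ⟨ht.isClique hat hbt hab, v, hvI, ?_⟩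
        intro w hw
        rcases Sym2.mem_iff.1 hw with rfl | rfl
        · exact ht.isClique hvt hat hav.symm
        · exact ht.isClique hvt hbt hbv.symm
      obtain ⟨w, hw, hwF⟩ := hcov _ he
      rcases Sym2.mem_iff.1 hw with rfl | rfl
      · exact ⟨_, hat, hwF⟩
      · exact ⟨_, hbt, hwF⟩
    · exact ⟨v, hvt, Finset.mem_union_left _ (Finset.mem_sdiff.2 ⟨hvF, hvI⟩)⟩
  · intro v hv
    rcases Finset.mem_union.1 hv with hv | hv
    · exact (Finset.mem_sdiff.1 hv).2
    · obtain ⟨e, he, rfl⟩ := Finset.mem_image.1 hv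
      exact hnI e (Finset.mem_filter.1 he).1 _ (Sym2.out_fst_mem e)
end

section
/- Let G be a finite simple graph, let I be a set of vertices of G such that no triangle of G contains two distinct vertices of I and every vertex of I lies in some triangle of G, and let H be the set of all edges of G that form a triangle together with some vertex of I. If |I| > |H|, then there exist a nonempty subset I' of I, a subset H' of H, and an injective map M' from H' to I' such that: for every edge uv in H', the vertex M'(uv) forms a triangle with u and v; and every edge of G that forms a triangle together with some vertex of I' belongs to H'. (In particular, (I', H', M') is a crown for the triangles of G.) -/
/-- If no triangle of `G` contains two distinct vertices of `I`, every vertex of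
`I` lies in a triangle, `H` is the set of edges forming a triangle with some vertex of `I`,
and `|I| > |H|`, then there is a crown `(I', H', M')` for the triangles of `G` with
`I' ⊆ I` nonempty and `H' ⊆ H`. -/
theorem crown_existence {V : Type*} [Fintype V] [DecidableEq V] (G : SimpleGraph V)
    (I : Finset V) (H : Finset (Sym2 V))
    (hI : ∀ t : Finset V, G.IsNClique 3 t → ∀ x ∈ I, ∀ y ∈ I, x ∈ t → y ∈ t → x = y)
    (hItri : ∀ x ∈ I, ∃ t : Finset V, G.IsNClique 3 t ∧ x ∈ t)
    (hH : ∀ e : Sym2 V, e ∈ H ↔ e ∈ G.edgeSet ∧ ∃ x ∈ I, ∀ w ∈ e, G.Adj x w)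
    (hcard : H.card < I.card) :
    ∃ (I' : Finset V) (H' : Finset (Sym2 V)) (M' : Sym2 V → V),
      I' ⊆ I ∧ I'.Nonempty ∧ H' ⊆ H ∧
      Set.InjOn M' ↑H' ∧
      (∀ e ∈ H', M' e ∈ I') ∧
      (∀ e ∈ H', ∀ w ∈ e, G.Adj (M' e) w) ∧
      (∀ e ∈ G.edgeSet, (∃ x ∈ I', ∀ w ∈ e, G.Adj x w) → e ∈ H') := by
  classical
  have key : ∀ J : Finset V, J ⊆ I →
      (H.filter (fun e => ∃ x ∈ J, ∀ w ∈ e, G.Adj x w)).card < J.card →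
      ∃ (I' : Finset V) (H' : Finset (Sym2 V)) (M' : Sym2 V → V),
      I' ⊆ I ∧ I'.Nonempty ∧ H' ⊆ H ∧
      Set.InjOn M' ↑H' ∧
      (∀ e ∈ H', M' e ∈ I') ∧
      (∀ e ∈ H', ∀ w ∈ e, G.Adj (M' e) w) ∧
      (∀ e ∈ G.edgeSet, (∃ x ∈ I', ∀ w ∈ e, G.Adj x w) → e ∈ H') := by
    intro J
    induction J using Finset.strongInduction with
    | H J ih =>
    intro hJ hc
    set N := H.filter (fun e => ∃ x ∈ J, ∀ w ∈ e, G.Adj x w) with hN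
    have hJne : J.Nonempty := Finset.card_pos.mp (by omega)
    let t : {e // e ∈ N} → Finset V := fun e => J.filter (fun x => ∀ w ∈ e.1, G.Adj x w)
    by_cases hall : ∀ S : Finset {e // e ∈ N}, S.card ≤ (S.biUnion t).card
    · obtain ⟨f, hf, hft⟩ := (Finset.all_card_le_biUnion_card_iff_exists_injective t).mp hall
      obtain ⟨v, hv⟩ := hJne
      refine ⟨J, N, fun e => if h : e ∈ N then f ⟨e, h⟩ else v, hJ, ⟨v, hv⟩,
        Finset.filter_subset _ _, ?_, ?_, ?_, ?_⟩
      · intro a ha b hb hab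
        have ha' : a ∈ N := ha
        have hb' : b ∈ N := hb
        simp only [ha', hb', dif_pos] at hab
        exact congrArg Subtype.val (hf hab)
      · intro e he
        simp only [he, dif_pos]
        exact (Finset.mem_filter.mp (hft ⟨e, he⟩)).1
      · intro e he
        simp only [he, dif_pos]
        exact (Finset.mem_filter.mp (hft ⟨e, he⟩)).2
      · rintro e he ⟨x, hx, hxe⟩
        exact Finset.mem_filter.mpr ⟨(hH e).mpr ⟨he, x, hJ hx, hxe⟩, x, hx, hxe⟩
    · push Not at hall
      obtain ⟨S, hS⟩ := hall
      have hTJ : S.biUnion t ⊆ J :=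
        Finset.biUnion_subset.mpr fun e _ => Finset.filter_subset _ _
      have hSne : S.Nonempty := Finset.card_pos.mp (by omega)
      have hTne : (S.biUnion t).Nonempty := by
        obtain ⟨e, he⟩ := hSne
        obtain ⟨_, x, hx, hxe⟩ := Finset.mem_filter.mp e.2
        exact ⟨x, Finset.mem_biUnion.mpr ⟨e, he, Finset.mem_filter.mpr ⟨hx, hxe⟩⟩⟩
      refine ih (J \ S.biUnion t) (Finset.sdiff_ssubset hTJ hTne)
        (Finset.sdiff_subset.trans hJ) ?_
      have hSN : S.map (Function.Embedding.subtype _) ⊆ N := by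
        intro e he
        obtain ⟨a, _, rfl⟩ := Finset.mem_map.mp he
        exact a.2
      have hsub : H.filter (fun e => ∃ x ∈ J \ S.biUnion t, ∀ w ∈ e, G.Adj x w) ⊆
          N \ S.map (Function.Embedding.subtype _) := by
        intro e he
        obtain ⟨heH, x, hx, hxe⟩ := Finset.mem_filter.mp he
        obtain ⟨hxJ, hxT⟩ := Finset.mem_sdiff.mp hx
        refine Finset.mem_sdiff.mpr ⟨Finset.mem_filter.mpr ⟨heH, x, hxJ, hxe⟩, fun h => ?_⟩
        obtain ⟨a, ha, rfl⟩ := Finset.mem_map.mp h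
        exact hxT (Finset.mem_biUnion.mpr ⟨a, ha, Finset.mem_filter.mpr ⟨hxJ, hxe⟩⟩)
      have h1 := Finset.card_le_card hsub
      have h2 := Finset.card_sdiff_add_card_eq_card hSN
      have h3 := Finset.card_sdiff_add_card_eq_card hTJ
      rw [Finset.card_map] at h2
      omega
  exact key I subset_rfl (lt_of_le_of_lt (Finset.card_filter_le _ _) hcard)
end

section
/- Let G be a finite simple graph and let A be a class of false twins of G, i.e., a set of pairwise non-adjacent vertices all having the same neighborhood. Let F be a minimal feedback vertex set of G, i.e., the graph induced on V(G) \ F is acyclic and no proper subset F' of F has the property that the graph induced on V(G) \ F' is acyclic. Then either F contains no vertex of A, or F contains all vertices of A except at most one (i.e., |A \ F| ≤ 1). -/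
/-- A minimal feedback vertex set `F` either contains no vertex of a false-twin
class `A`, or it contains all vertices of `A` except at most one. -/
theorem minimal_fvs_false_twins {V : Type*} [Fintype V] [DecidableEq V] (G : SimpleGraph V)
    (A F : Finset V)
    (hA1 : ∀ a ∈ A, ∀ b ∈ A, a ≠ b → ¬ G.Adj a b)
    (hA2 : ∀ a ∈ A, ∀ b ∈ A, G.neighborSet a = G.neighborSet b)
    (hF : (G.induce {v | v ∉ F}).IsAcyclic)
    (hmin : ∀ F' : Finset V, F' ⊂ F → ¬ (G.induce {v | v ∉ F'}).IsAcyclic) :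
    (∀ a ∈ A, a ∉ F) ∨ (A \ F).card ≤ 1 := by
  by_contra! hcon
  obtain ⟨⟨a, haA, haF⟩, hcard⟩ := hcon
  obtain ⟨b, hb, c, hc, hbc⟩ := Finset.one_lt_card.mp hcard
  rw [Finset.mem_sdiff] at hb hc
  -- no two distinct neighbours of `a` outside `F`
  have key : ∀ x y : V, x ∉ F → y ∉ F → G.Adj a x → G.Adj a y → x = y := by
    intro x y hx hy hax hay
    by_contra hxy
    have hadj : ∀ d ∈ A, ∀ z, G.Adj a z → G.Adj d z := by
      intro d hd z hz
      have : z ∈ G.neighborSet d := by rw [← hA2 a haA d hd]; exact hz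
      exact this
    let X : {v | v ∉ F} := ⟨x, hx⟩
    let Y : {v | v ∉ F} := ⟨y, hy⟩
    have hp : ∀ (d : V) (hd : d ∈ A) (hdF : d ∉ F), ∃ p : (G.induce {v | v ∉ F}).Path X Y,
        p.1.support = [X, ⟨d, hdF⟩, Y] := by
      intro d hd hdF
      let D : {v | v ∉ F} := ⟨d, hdF⟩
      have h1 : (G.induce {v | v ∉ F}).Adj X D := (hadj d hd x hax).symm
      have h2 : (G.induce {v | v ∉ F}).Adj D Y := hadj d hd y hay
      have hXY : X ≠ Y := fun h => hxy (congrArg Subtype.val h)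
      refine ⟨⟨.cons h1 (.cons h2 .nil), ?_⟩, by simp [D]⟩
      rw [SimpleGraph.Walk.isPath_def]
      simp [h1.ne, h2.ne, hXY]
    obtain ⟨p, hp1⟩ := hp b hb.1 hb.2
    obtain ⟨q, hq1⟩ := hp c hc.1 hc.2
    have := (hF.subsingleton_path X Y).elim p q
    rw [this, hq1] at hp1
    simp at hp1
    exact hbc hp1.symm
  refine hmin (F.erase a) (Finset.erase_ssubset haF) ?_
  intro v w hw
  have hmem : ∀ u : {v | v ∉ F.erase a}, u.1 ≠ a → u.1 ∉ F := by
    intro u hu h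
    exact u.2 (Finset.mem_erase.mpr ⟨hu, h⟩)
  by_cases ha : (⟨a, by simp⟩ : {v | v ∉ F.erase a}) ∈ w.support
  · have hw' := hw.rotate ha
    set w' := w.rotate _ ha
    have h1 := w'.adj_snd hw'.not_nil
    have h2 := (w'.adj_penultimate hw'.not_nil).symm
    have h1' : G.Adj a w'.snd.1 := h1
    have h2' : G.Adj a w'.penultimate.1 := h2
    exact hw'.snd_ne_penultimate (Subtype.ext (key _ _ (hmem _ h1'.ne') (hmem _ h2'.ne') h1' h2'))
  · let f := (SimpleGraph.Embedding.induce (G := G) {v | v ∉ F.erase a})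
    have hs : ∀ u ∈ (w.map f.toHom).support, u ∈ {v | v ∉ F} := by
      intro u hu
      rw [SimpleGraph.Walk.support_map, List.mem_map] at hu
      obtain ⟨z, hz, rfl⟩ := hu
      refine hmem z ?_
      rintro h
      apply ha
      convert hz
      exact h.symm
    have hm : (w.map f.toHom).IsCycle := hw.map f.injective
    apply hF ((w.map f.toHom).induce _ hs)
    rw [← SimpleGraph.Walk.isCycle_map_iff_of_injective (f := (SimpleGraph.Embedding.induce (G := G) {v | v ∉ F}).toHom)
      (SimpleGraph.Embedding.induce (G := G) {v | v ∉ F}).injective]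
    have := SimpleGraph.Walk.map_induce (w.map f.toHom) hs
    exact (congrArg SimpleGraph.Walk.IsCycle this).mpr hm
end

section
/- Let G be a finite simple graph and let A be a class of false twins of G, i.e., a set of pairwise non-adjacent vertices all having the same neighborhood. Let F be a minimal odd cycle transversal of G, i.e., the graph induced on V(G) \ F is bipartite (2-colorable) and no proper subset F' of F has the property that the graph induced on V(G) \ F' is bipartite. Then either F contains no vertex of A, or F contains all vertices of A except at most two (i.e., |A \ F| ≤ 2). -/
/-- A minimal odd cycle transversal `F` either contains no vertex of a false-twin
class `A`, or it contains all vertices of `A` except at most two. -/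
theorem minimal_oct_false_twins {V : Type*} [Fintype V] [DecidableEq V] (G : SimpleGraph V)
    (A F : Finset V)
    (hA1 : ∀ a ∈ A, ∀ b ∈ A, a ≠ b → ¬ G.Adj a b)
    (hA2 : ∀ a ∈ A, ∀ b ∈ A, G.neighborSet a = G.neighborSet b)
    (hF : (G.induce {v | v ∉ F}).Colorable 2)
    (hmin : ∀ F' : Finset V, F' ⊂ F → ¬ (G.induce {v | v ∉ F'}).Colorable 2) :
    (∀ a ∈ A, a ∉ F) ∨ (A \ F).card ≤ 2 := by
  by_contra hcon
  push Not at hcon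
  obtain ⟨⟨a, haA, haF⟩, hcard⟩ := hcon
  have hne : (A \ F).Nonempty := Finset.card_pos.mp (by omega)
  obtain ⟨b, hb⟩ := hne
  rw [Finset.mem_sdiff] at hb
  obtain ⟨hbA, hbF⟩ := hb
  have hab : ∀ y, G.Adj a y ↔ G.Adj b y := fun y => by
    have h := hA2 a haA b hbA
    have h2 := Set.ext_iff.mp h y
    simpa using h2
  refine hmin (F.erase a) (Finset.erase_ssubset haF) ?_
  obtain ⟨c⟩ := hF
  have hmem : ∀ v : {v | v ∉ F.erase a}, v.1 ≠ a → v.1 ∈ {v | v ∉ F} := by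
    intro v hv hvF
    exact v.2 (Finset.mem_erase.mpr ⟨hv, hvF⟩)
  refine ⟨SimpleGraph.Coloring.mk
    (fun v => if h : v.1 = a then c ⟨b, hbF⟩ else c ⟨v.1, hmem v h⟩) ?_⟩
  intro u v huv
  have huv' : G.Adj u.1 v.1 := huv
  by_cases hu : u.1 = a
  · have hv : v.1 ≠ a := fun h => by
      rw [hu, h] at huv'
      exact G.loopless.irrefl _ huv'
    simp only [hu, hv, dif_pos, dif_neg, not_false_eq_true]
    apply c.valid
    rw [hu] at huv'
    exact (hab _).mp huv'
  · by_cases hv : v.1 = a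
    · simp only [hu, hv, dif_pos, dif_neg, not_false_eq_true]
      apply c.valid
      rw [hv] at huv'
      exact ((hab _).mp huv'.symm).symm
    · simp only [hu, hv, dif_neg, not_false_eq_true]
      apply c.valid
      exact huv'
end

section
/- Let G be a finite simple graph, let p be a natural number, and let F₀ be a set of vertices of G such that: (i) every triangle of G contains a vertex of F₀ (F₀ is a triangle hitting set), and (ii) for every vertex v of F₀, every set of pairwise vertex-disjoint edges of the subgraph of G induced by N(v) \ F₀ has size at most p. Then G has a core W with |W| ≤ |E(G[F₀])| + p·|F₀|, where E(G[F₀]) is the set of edges of G with both endpoints in F₀; that is, there is a set W of at most |E(G[F₀])| + p·|F₀| triangles of G such that every triangle of G shares at least two vertices with some triangle of W. -/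
/-- If `F₀` is a triangle hitting set of `G` such that for every `v ∈ F₀` every
matching of the subgraph of `G` induced by `N(v) \ F₀` has size at most `p`, then `G` has a
core `W` of size at most `|E(G[F₀])| + p·|F₀|`. -/
theorem core_construction {V : Type*} [Fintype V] [DecidableEq V] (G : SimpleGraph V)
    (p : ℕ) (F₀ : Finset V)
    (hhit : ∀ t : Finset V, G.IsNClique 3 t → ∃ v ∈ t, v ∈ F₀)
    (hmatch : ∀ v ∈ F₀, ∀ M : Finset (Sym2 V),
      (∀ e ∈ M, e ∈ G.edgeSet ∧ ∀ w ∈ e, G.Adj v w ∧ w ∉ F₀) →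
      (∀ e ∈ M, ∀ f ∈ M, e ≠ f → ∀ w ∈ e, w ∉ f) →
      M.card ≤ p) :
    ∃ W : Finset (Finset V),
      (∀ t ∈ W, G.IsNClique 3 t) ∧
      W.card ≤ {e : Sym2 V | e ∈ G.edgeSet ∧ ∀ w ∈ e, w ∈ F₀}.ncard + p * F₀.card ∧
      (∀ t : Finset V, G.IsNClique 3 t → ∃ s ∈ W, 2 ≤ (t ∩ s).card) := by
  classical
  have hM : ∀ v, ∃ M : Finset (Sym2 V), v ∈ F₀ →
      (∀ e ∈ M, e ∈ G.edgeSet ∧ ∀ w ∈ e, G.Adj v w ∧ w ∉ F₀) ∧ M.card ≤ p ∧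
      ∀ a b, G.Adj a b → G.Adj v a → G.Adj v b → a ∉ F₀ → b ∉ F₀ →
        ∃ e ∈ M, a ∈ e ∨ b ∈ e := by
    intro v
    obtain ⟨M, hMm, hmax⟩ := Finset.exists_max_image
      (Finset.univ.filter (fun M : Finset (Sym2 V) =>
        (∀ e ∈ M, e ∈ G.edgeSet ∧ ∀ w ∈ e, G.Adj v w ∧ w ∉ F₀) ∧
        (∀ e ∈ M, ∀ f ∈ M, e ≠ f → ∀ w ∈ e, w ∉ f))) Finset.card ⟨∅, by simp⟩
    simp only [Finset.mem_filter, Finset.mem_univ, true_and] at hMm hmax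
    refine ⟨M, fun hv => ⟨hMm.1, hmatch v hv M hMm.1 hMm.2, ?_⟩⟩
    intro a b hab hva hvb ha hb
    by_contra hcon
    push Not at hcon
    have hnot : s(a, b) ∉ M := fun h => (hcon _ h).1 (by simp)
    have := hmax (insert s(a, b) M) ⟨by
      intro e he
      rcases Finset.mem_insert.1 he with rfl | he
      · refine ⟨hab, fun w hw => ?_⟩
        rcases Sym2.mem_iff.1 hw with rfl | rfl
        · exact ⟨hva, ha⟩
        · exact ⟨hvb, hb⟩
      · exact hMm.1 e he, by
      intro e he f hf hef w hwe hwf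
      rcases Finset.mem_insert.1 he with rfl | he2 <;>
        rcases Finset.mem_insert.1 hf with rfl | hf2
      · exact hef rfl
      · rcases Sym2.mem_iff.1 hwe with rfl | rfl
        · exact (hcon f hf2).1 hwf
        · exact (hcon f hf2).2 hwf
      · rcases Sym2.mem_iff.1 hwf with rfl | rfl
        · exact (hcon e he2).1 hwe
        · exact (hcon e he2).2 hwe
      · exact hMm.2 e he2 f hf2 hef w hwe hwf⟩
    rw [Finset.card_insert_of_notMem hnot] at this
    omega
  choose M hM using hM
  have hf : ∀ e : Sym2 V, ∃ s : Finset V, (∃ t, G.IsNClique 3 t ∧ ∀ w ∈ e, w ∈ t) →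
      (G.IsNClique 3 s ∧ ∀ w ∈ e, w ∈ s) := by
    intro e
    by_cases h : ∃ t, G.IsNClique 3 t ∧ ∀ w ∈ e, w ∈ t
    · obtain ⟨t, ht⟩ := h
      exact ⟨t, fun _ => ht⟩
    · exact ⟨∅, fun h' => (h h').elim⟩
  choose f hf using hf
  have two : ∀ (x y : V) (t s : Finset V), x ≠ y → x ∈ t → y ∈ t → x ∈ s → y ∈ s →
      2 ≤ (t ∩ s).card := by
    intro x y t s hxy h1 h2 h3 h4
    exact Finset.one_lt_card.2 ⟨x, by simp [*], y, by simp [*], hxy⟩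
  set E : Finset (Sym2 V) := Finset.univ.filter
    (fun e : Sym2 V => e ∈ G.edgeSet ∧ ∀ w ∈ e, w ∈ F₀) with hE
  have hEc : {e : Sym2 V | e ∈ G.edgeSet ∧ ∀ w ∈ e, w ∈ F₀}.ncard = E.card := by
    rw [← Set.ncard_coe_finset]
    congr 1
    ext e
    simp [hE]
  refine ⟨(E.filter (fun e => ∃ t, G.IsNClique 3 t ∧ ∀ w ∈ e, w ∈ t)).image f ∪
    F₀.biUnion (fun v => (M v).image (fun e => insert v e.toFinset)), ?_, ?_, ?_⟩
  · intro t ht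
    rcases Finset.mem_union.1 ht with ht | ht
    · obtain ⟨e, he, rfl⟩ := Finset.mem_image.1 ht
      exact (hf e (Finset.mem_filter.1 he).2).1
    · obtain ⟨v, hv, ht⟩ := Finset.mem_biUnion.1 ht
      obtain ⟨e, he, rfl⟩ := Finset.mem_image.1 ht
      have h := (hM v hv).1 e he
      induction e using Sym2.ind with
      | _ a b =>
        have : insert v (s(a, b)).toFinset = {v, a, b} := by
          ext x; simp
        rw [this, SimpleGraph.is3Clique_triple_iff]
        exact ⟨(h.2 a (by simp)).1, (h.2 b (by simp)).1, h.1⟩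
  · rw [hEc]
    refine (Finset.card_union_le _ _).trans (Nat.add_le_add ?_ ?_)
    · exact Finset.card_image_le.trans (Finset.card_filter_le _ _)
    · rw [mul_comm]
      exact Finset.card_biUnion_le_card_mul _ _ _
        fun v hv => Finset.card_image_le.trans (hM v hv).2.1
  · intro t ht
    obtain ⟨v, hvt, hv⟩ := hhit t ht
    by_cases h : ∃ u ∈ t, u ∈ F₀ ∧ u ≠ v
    · obtain ⟨u, hut, hu, huv⟩ := h
      have hex : ∃ t, G.IsNClique 3 t ∧ ∀ w ∈ s(u, v), w ∈ t :=
        ⟨t, ht, by simp [hut, hvt]⟩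
      have hadj : G.Adj u v := ht.1 hut hvt huv
      refine ⟨f s(u, v), Finset.mem_union_left _ (Finset.mem_image_of_mem _
        (Finset.mem_filter.2 ⟨by simp [hE, hadj, hu, hv], hex⟩)), ?_⟩
      have h2 := (hf _ hex).2
      exact two u v _ _ huv hut hvt (h2 u (by simp)) (h2 v (by simp))
    · push Not at h
      have hc : (t.erase v).card = 2 := by
        rw [Finset.card_erase_of_mem hvt, ht.2]
      obtain ⟨a, b, hab, hEq⟩ := Finset.card_eq_two.1 hc
      have ha : a ∈ t.erase v := by simp [hEq]
      have hb : b ∈ t.erase v := by simp [hEq]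
      obtain ⟨hav, hat⟩ := Finset.mem_erase.1 ha
      obtain ⟨hbv, hbt⟩ := Finset.mem_erase.1 hb
      obtain ⟨e, he, h'⟩ := (hM v hv).2.2 a b (ht.1 hat hbt hab) (ht.1 hvt hat hav.symm)
        (ht.1 hvt hbt hbv.symm) (fun h1 => hav (h a hat h1)) (fun h1 => hbv (h b hbt h1))
      refine ⟨insert v e.toFinset, Finset.mem_union_right _ (Finset.mem_biUnion.2
        ⟨v, hv, Finset.mem_image_of_mem (fun e : Sym2 V => insert v e.toFinset) he⟩), ?_⟩
      rcases h' with h' | h'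
      · exact two v a _ _ hav.symm hvt hat (by simp) (by simp [h'])
      · exact two v b _ _ hbv.symm hvt hbt (by simp) (by simp [h'])
end

section
/- Let G be a finite simple graph and let W be a core of G, i.e., a set of triangles of G such that every triangle of G shares at least two vertices with some triangle of W. Let I be the set of vertices of G that are contained in some triangle of G but in no triangle of W, and let H be the set of edges of G that form a triangle together with some vertex of I. Then every edge of H has both of its endpoints contained in a common triangle of W, and consequently |H| ≤ 3·|W|. -/
/-- Let `W` be a core of `G`, `I` the set of vertices in some triangle of `G` but
in no triangle of `W`, and `H` the set of edges of `G` forming a triangle with some vertex of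
`I`. Then both endpoints of every edge of `H` lie in a common triangle of `W`, and
`|H| ≤ 3·|W|`. -/
theorem core_edges_bound {V : Type*} [Fintype V] [DecidableEq V] (G : SimpleGraph V)
    (W : Finset (Finset V)) (I : Finset V) (H : Finset (Sym2 V))
    (hW : ∀ t ∈ W, G.IsNClique 3 t)
    (hcore : ∀ t : Finset V, G.IsNClique 3 t → ∃ s ∈ W, 2 ≤ (t ∩ s).card)
    (hI : ∀ x : V, x ∈ I ↔ (∃ t : Finset V, G.IsNClique 3 t ∧ x ∈ t) ∧ ∀ s ∈ W, x ∉ s)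
    (hH : ∀ e : Sym2 V, e ∈ H ↔ e ∈ G.edgeSet ∧ ∃ x ∈ I, ∀ w ∈ e, G.Adj x w) :
    (∀ e ∈ H, ∃ s ∈ W, ∀ w ∈ e, w ∈ s) ∧ H.card ≤ 3 * W.card := by
  have key : ∀ e ∈ H, ∃ s ∈ W, ∀ w ∈ e, w ∈ s := by
    intro e he
    induction e using Sym2.ind with
    | _ a b =>
      obtain ⟨hab, x, hx, hadj⟩ := (hH _).1 he
      rw [SimpleGraph.mem_edgeSet] at hab
      have hxa : G.Adj x a := hadj a (by simp)
      have hxb : G.Adj x b := hadj b (by simp)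
      obtain ⟨s, hs, hc⟩ := hcore {x, a, b}
        (SimpleGraph.is3Clique_triple_iff.2 ⟨hxa, hxb, hab⟩)
      have hxs := ((hI x).1 hx).2 s hs
      have hsub : ({x, a, b} : Finset V) ∩ s ⊆ {a, b} := by
        intro y hy
        simp only [Finset.mem_inter, Finset.mem_insert, Finset.mem_singleton] at hy ⊢
        rcases hy with ⟨rfl | h, h2⟩
        · exact absurd h2 hxs
        · exact h
      have heq := Finset.eq_of_subset_of_card_le hsub (Finset.card_le_two.trans hc)
      refine ⟨s, hs, fun w hw => ?_⟩
      have hw' : w ∈ ({a, b} : Finset V) := by simpa using hw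
      rw [← heq] at hw'
      exact (Finset.mem_inter.1 hw').2
  refine ⟨key, ?_⟩
  have hsub : H ⊆ W.biUnion (fun s => s.offDiag.image (fun p => s(p.1, p.2))) := by
    intro e he
    obtain ⟨s, hs, hw⟩ := key e he
    have hee := ((hH e).1 he).1
    induction e using Sym2.ind with
    | _ a b =>
      rw [SimpleGraph.mem_edgeSet] at hee
      refine Finset.mem_biUnion.2 ⟨s, hs, Finset.mem_image.2 ⟨(a, b), ?_, rfl⟩⟩
      exact Finset.mem_offDiag.2 ⟨hw a (by simp), hw b (by simp), hee.ne⟩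
  refine (Finset.card_le_card hsub).trans ?_
  rw [mul_comm]
  refine Finset.card_biUnion_le_card_mul _ _ _ fun s hs => ?_
  have h := Sym2.card_image_offDiag s
  rw [(hW s hs).card_eq] at h
  exact le_of_eq h
end

section
/- Let ι be a finite index set and, for each i ∈ ι, let Dᵢ be the closed ball in the Euclidean plane ℝ² with center cᵢ and radius rᵢ > 0. Suppose the family has ply at most p, i.e., every point of ℝ² lies in at most p of the balls Dᵢ. Then for every index i₀ ∈ ι, the number of indices i ∈ ι with rᵢ ≥ r_{i₀} and Dᵢ ∩ D_{i₀} ≠ ∅ is at most 9p. -/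
theorem exists_shrunk_disk {a b : EuclideanSpace ℝ (Fin 2)} {s R : ℝ} (hs : 0 < s) (hR : s ≤ R)
    (h : dist b a ≤ R + s) :
    ∃ c' : EuclideanSpace ℝ (Fin 2), Metric.closedBall c' s ⊆ Metric.closedBall b R ∧
      Metric.closedBall c' s ⊆ Metric.closedBall a (3 * s) := by
  by_cases hd : dist b a ≤ 2 * s
  · exact ⟨b, Metric.closedBall_subset_closedBall hR,
      Metric.closedBall_subset_closedBall' (by linarith)⟩
  · have hd : 2 * s < dist b a := lt_of_not_ge hd
    have hpos : 0 < dist b a := by linarith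
    refine ⟨AffineMap.lineMap a b (2 * s / dist b a), ?_, ?_⟩
    · apply Metric.closedBall_subset_closedBall'
      rw [dist_lineMap_right, dist_comm a b, Real.norm_of_nonneg, sub_mul,
        div_mul_cancel₀ _ hpos.ne']
      · linarith
      · rw [sub_nonneg, div_le_one hpos]; exact hd.le
    · apply Metric.closedBall_subset_closedBall'
      rw [dist_lineMap_left, dist_comm a b, Real.norm_of_nonneg (by positivity),
        div_mul_cancel₀ _ hpos.ne']
      linarith

open MeasureTheory in
/-- For a finite family of closed disks in the plane of ply at most `p`, each
disk `D_{i₀}` intersects at most `9p` disks of radius at least `r_{i₀}` (itself included). -/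
theorem disks_larger_intersecting_bound {ι : Type*} [Fintype ι]
    (c : ι → EuclideanSpace ℝ (Fin 2)) (r : ι → ℝ) (hr : ∀ i, 0 < r i) (p : ℕ)
    (hply : ∀ x : EuclideanSpace ℝ (Fin 2),
      ({i | x ∈ Metric.closedBall (c i) (r i)} : Set ι).ncard ≤ p)
    (i₀ : ι) :
    ({i | r i₀ ≤ r i ∧
        (Metric.closedBall (c i) (r i) ∩ Metric.closedBall (c i₀) (r i₀)).Nonempty} :
      Set ι).ncard ≤ 9 * p := by
  classical
  set S : Set ι := {i | r i₀ ≤ r i ∧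
        (Metric.closedBall (c i) (r i) ∩ Metric.closedBall (c i₀) (r i₀)).Nonempty} with hS
  have key : ∀ i : ι, ∃ c' : EuclideanSpace ℝ (Fin 2), i ∈ S →
      Metric.closedBall c' (r i₀) ⊆ Metric.closedBall (c i) (r i) ∧
      Metric.closedBall c' (r i₀) ⊆ Metric.closedBall (c i₀) (3 * r i₀) := by
    intro i
    by_cases hi : i ∈ S
    · obtain ⟨h1, x, hx1, hx2⟩ := hi
      rw [Metric.mem_closedBall] at hx1 hx2
      have := dist_triangle_left (c i) (c i₀) x
      obtain ⟨c', h⟩ := exists_shrunk_disk (a := c i₀) (b := c i) (hr i₀) h1 (by linarith)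
      exact ⟨c', fun _ => h⟩
    · exact ⟨0, fun h => absurd h hi⟩
  choose c' hc' using key
  set s := r i₀ with hs
  have hs0 : 0 < s := hr i₀
  set B := Metric.closedBall (c i₀) (3 * s) with hB
  let V := (volume : Measure (EuclideanSpace ℝ (Fin 2))) (Metric.closedBall 0 1)
  have hV0 : V ≠ 0 := (Metric.measure_closedBall_pos _ _ one_pos).ne'
  have hVt : V ≠ ⊤ := measure_closedBall_lt_top.ne
  have hvol : ∀ (x : EuclideanSpace ℝ (Fin 2)) (t : ℝ), 0 ≤ t →
      volume (Metric.closedBall x t) = ENNReal.ofReal (t ^ 2) * V := by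
    intro x t ht
    rw [Measure.addHaar_closedBall' _ x ht]; simp [V]
  have h1 : ∑ i ∈ S.toFinset, volume (Metric.closedBall (c' i) s) ≤ (p : ENNReal) * volume B := by
    calc ∑ i ∈ S.toFinset, volume (Metric.closedBall (c' i) s)
        = ∑ i ∈ S.toFinset, ∫⁻ x, (Metric.closedBall (c' i) s).indicator 1 x := by
          refine Finset.sum_congr rfl fun i _ => ?_
          rw [lintegral_indicator_one Metric.isClosed_closedBall.measurableSet]
      _ = ∫⁻ x, ∑ i ∈ S.toFinset, (Metric.closedBall (c' i) s).indicator 1 x := by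
          rw [lintegral_finsetSum]
          intro i _
          exact measurable_one.indicator Metric.isClosed_closedBall.measurableSet
      _ ≤ ∫⁻ x, B.indicator (fun _ => (p : ENNReal)) x := by
          refine lintegral_mono fun x => ?_
          by_cases hx : x ∈ B
          · simp only [Set.indicator_of_mem hx, Set.indicator_apply, Pi.one_apply,
              Finset.sum_boole]
            norm_cast
            refine le_trans ?_ (hply x)
            rw [← Set.ncard_coe_finset]
            refine Set.ncard_le_ncard ?_ (Set.toFinite _)
            intro i hi
            simp only [Finset.coe_filter, Set.mem_toFinset, Set.mem_setOf_eq] at hi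
            exact (hc' i hi.1).1 hi.2
          · rw [Set.indicator_of_notMem hx, nonpos_iff_eq_zero]
            refine Finset.sum_eq_zero fun i hi => Set.indicator_of_notMem ?_ _
            exact fun h => hx ((hc' i (Set.mem_toFinset.1 hi)).2 h)
      _ = (p : ENNReal) * volume B := by
          rw [lintegral_indicator_const Metric.isClosed_closedBall.measurableSet]
  rw [hB, hvol _ _ (by positivity), Finset.sum_congr rfl (fun i _ => hvol (c' i) s hs0.le),
    Finset.sum_const, nsmul_eq_mul, ← mul_assoc, ← mul_assoc,
    ENNReal.mul_le_mul_iff_left hV0 hVt, ← ENNReal.ofReal_natCast, ← ENNReal.ofReal_natCast,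
    ← ENNReal.ofReal_mul (by positivity), ← ENNReal.ofReal_mul (by positivity),
    ENNReal.ofReal_le_ofReal_iff (by positivity)] at h1
  have h2 : (S.toFinset.card : ℝ) ≤ 9 * p := by
    refine le_of_mul_le_mul_right ?_ (pow_pos hs0 2)
    linarith
  rw [Set.ncard_eq_toFinset_card']
  exact_mod_cast h2
end

section
/- Let ι be a finite index set of size n and, for each i ∈ ι, let Dᵢ be the closed ball in the Euclidean plane ℝ² with center cᵢ and radius rᵢ > 0. Suppose every point of ℝ² lies in at most p of the balls Dᵢ. Let G be the intersection graph of the family, i.e., the simple graph on vertex set ι in which distinct i, j are adjacent if and only if Dᵢ ∩ Dⱼ ≠ ∅. Then G has at most 9·p·n edges. -/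
open MeasureTheory in
lemma disk_aux_shrink (a x b : EuclideanSpace ℝ (Fin 2)) (s t : ℝ) (hs : 0 < s) (hst : s ≤ t)
    (hxa : x ∈ Metric.closedBall a s) (hxb : x ∈ Metric.closedBall b t) :
    ∃ d, Metric.closedBall d s ⊆ Metric.closedBall b t ∧
      Metric.closedBall d s ⊆ Metric.closedBall a (3 * s) := by
  have ht : 0 < t := lt_of_lt_of_le hs hst
  rw [Metric.mem_closedBall] at hxa hxb
  have h1 : s / t ≤ 1 := (div_le_one ht).2 hst
  have h0 : 0 ≤ s / t := by positivity
  refine ⟨AffineMap.lineMap x b (s / t), ?_, ?_⟩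
  · apply Metric.closedBall_subset_closedBall'
    rw [dist_lineMap_right, Real.norm_of_nonneg (by linarith)]
    have : (1 - s / t) * dist x b ≤ (1 - s / t) * t :=
      mul_le_mul_of_nonneg_left hxb (by linarith)
    have h2 : (1 - s / t) * t = t - s := by field_simp
    linarith
  · apply Metric.closedBall_subset_closedBall'
    have h3 := dist_triangle (AffineMap.lineMap x b (s / t)) x a
    rw [dist_lineMap_left, Real.norm_of_nonneg h0] at h3
    have : (s / t) * dist x b ≤ (s / t) * t := mul_le_mul_of_nonneg_left hxb h0
    have h2 : s / t * t = s := by field_simp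
    linarith

open MeasureTheory in
lemma disk_aux_pack {ι : Type*} (N : Finset ι) (d : ι → EuclideanSpace ℝ (Fin 2))
    (a : EuclideanSpace ℝ (Fin 2)) (s : ℝ) (hs : 0 < s) (p : ℕ)
    (hd : ∀ j ∈ N, Metric.closedBall (d j) s ⊆ Metric.closedBall a (3 * s))
    (hp : ∀ x, ({j | j ∈ N ∧ x ∈ Metric.closedBall (d j) s} : Set ι).ncard ≤ p) :
    N.card ≤ 9 * p := by
  classical
  have hvol : ∀ x : EuclideanSpace ℝ (Fin 2), volume (Metric.closedBall x s)
      = volume (Metric.closedBall a s) := fun x => by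
    rw [Measure.addHaar_closedBall _ _ hs.le, Measure.addHaar_closedBall _ _ hs.le]
  have hvol3 : volume (Metric.closedBall a (3 * s)) = 9 * volume (Metric.closedBall a s) := by
    rw [Measure.addHaar_closedBall _ _ hs.le, Measure.addHaar_closedBall _ _ (by positivity),
      ← mul_assoc]
    congr 1
    rw [finrank_euclideanSpace, Fintype.card_fin, mul_pow, ENNReal.ofReal_mul (by positivity)]
    norm_num
  have hV0 : volume (Metric.closedBall a s) ≠ 0 := (Metric.measure_closedBall_pos _ _ hs).ne'
  have hVt : volume (Metric.closedBall a s) ≠ ⊤ := measure_closedBall_lt_top.ne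
  have key : (N.card : ENNReal) * volume (Metric.closedBall a s)
      ≤ ((9 * p : ℕ) : ENNReal) * volume (Metric.closedBall a s) := by
    calc (N.card : ENNReal) * volume (Metric.closedBall a s)
        = ∑ j ∈ N, volume (Metric.closedBall (d j) s) := by
          simp [hvol]
      _ = ∑ j ∈ N, ∫⁻ x, (Metric.closedBall (d j) s).indicator 1 x := by
          refine Finset.sum_congr rfl fun j _ => ?_
          rw [lintegral_indicator_one measurableSet_closedBall]
      _ = ∫⁻ x, ∑ j ∈ N, (Metric.closedBall (d j) s).indicator 1 x := by
          rw [lintegral_finsetSum]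
          intro j _
          exact measurable_one.indicator measurableSet_closedBall
      _ ≤ ∫⁻ x, (Metric.closedBall a (3 * s)).indicator (fun _ => (p : ENNReal)) x := by
          refine lintegral_mono fun x => ?_
          by_cases hx : x ∈ Metric.closedBall a (3 * s)
          · rw [Set.indicator_of_mem hx]
            simp only [Set.indicator_apply, Pi.one_apply]
            rw [Finset.sum_boole]
            have := hp x
            rw [← Finset.coe_filter, Set.ncard_coe_finset] at this
            exact_mod_cast this
          · rw [Set.indicator_of_notMem hx]
            refine le_of_eq (Finset.sum_eq_zero fun j hj => ?_)
            exact Set.indicator_of_notMem (fun h => hx (hd j hj h)) _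
      _ = ((9 * p : ℕ) : ENNReal) * volume (Metric.closedBall a s) := by
          rw [lintegral_indicator_const measurableSet_closedBall, hvol3]
          push_cast
          ring
  have := (ENNReal.mul_le_mul_iff_left hV0 hVt).1 key
  exact_mod_cast this

/-- The intersection graph of a finite family of `n` closed disks in the plane
of ply at most `p` has at most `9·p·n` edges. -/
theorem disk_graph_edge_bound {ι : Type*} [Fintype ι] (n : ℕ) (hn : Fintype.card ι = n)
    (c : ι → EuclideanSpace ℝ (Fin 2)) (r : ι → ℝ) (hr : ∀ i, 0 < r i) (p : ℕ)
    (hply : ∀ x : EuclideanSpace ℝ (Fin 2),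
      ({i | x ∈ Metric.closedBall (c i) (r i)} : Set ι).ncard ≤ p)
    (G : SimpleGraph ι)
    (hG : ∀ i j, G.Adj i j ↔ i ≠ j ∧
      (Metric.closedBall (c i) (r i) ∩ Metric.closedBall (c j) (r j)).Nonempty) :
    G.edgeSet.ncard ≤ 9 * p * n := by
  classical
  let N : ι → Finset ι := fun i => Finset.univ.filter fun j => G.Adj i j ∧ r i ≤ r j
  have hN : ∀ i, (N i).card ≤ 9 * p := by
    intro i
    have hex : ∀ j, ∃ d, j ∈ N i → Metric.closedBall d (r i) ⊆ Metric.closedBall (c j) (r j) ∧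
        Metric.closedBall d (r i) ⊆ Metric.closedBall (c i) (3 * r i) := by
      intro j
      by_cases hj : j ∈ N i
      · have hj' : G.Adj i j ∧ r i ≤ r j := by simpa [N] using hj
        obtain ⟨-, x, hx1, hx2⟩ := (hG i j).1 hj'.1
        obtain ⟨d, hd⟩ := disk_aux_shrink _ x _ _ _ (hr i) hj'.2 hx1 hx2
        exact ⟨d, fun _ => hd⟩
      · exact ⟨0, fun h => absurd h hj⟩
    choose d hd using hex
    refine disk_aux_pack (N i) d (c i) (r i) (hr i) p (fun j hj => (hd j hj).2) fun x => ?_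
    refine le_trans (Set.ncard_le_ncard ?_ (Set.toFinite _)) (hply x)
    rintro j ⟨hj, hx⟩
    exact (hd j hj).1 hx
  have hsub : G.edgeSet ⊆ ((Finset.univ.biUnion fun i => (N i).image fun j => s(i, j) :
      Finset (Sym2 ι)) : Set (Sym2 ι)) := by
    intro e
    induction e with
    | _ i j =>
      intro h
      rw [SimpleGraph.mem_edgeSet] at h
      simp only [Finset.mem_coe, Finset.mem_biUnion, Finset.mem_univ, true_and, Finset.mem_image]
      rcases le_total (r i) (r j) with hij | hij
      · exact ⟨i, j, by simp [N, h, hij], rfl⟩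
      · exact ⟨j, i, by simp [N, h.symm, hij], Sym2.eq_swap⟩
  calc G.edgeSet.ncard ≤ _ := Set.ncard_le_ncard hsub (Finset.finite_toSet _)
    _ = _ := Set.ncard_coe_finset _
    _ ≤ ∑ i, ((N i).image fun j => s(i, j)).card := Finset.card_biUnion_le
    _ ≤ ∑ _i : ι, 9 * p := Finset.sum_le_sum fun i _ => Finset.card_image_le.trans (hN i)
    _ = 9 * p * n := by simp [hn, mul_comm]
end

section
/- Let p ≥ 1 be a natural number and let N : ℕ → ℕ → ℕ be a function satisfying: N(k, m) ≤ 1 whenever k = 0 or m ≥ k; and N(k, m) ≤ N(k−1, m) + N(k, m+p) whenever k ≥ 1 and m < k. Then for all k and m, N(k, m) ≤ C(k + a, a) where a = ⌈(k − m)/p⌉ (with k − m taken as 0 when m ≥ k) and C denotes the binomial coefficient. In particular, N(k, 0) ≤ C(k + ⌈k/p⌉, ⌈k/p⌉). -/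
/-- The branching recurrence `N(k,m) ≤ N(k-1,m) + N(k,m+p)` with boundary
condition `N(k,m) ≤ 1` when `k = 0` or `m ≥ k` satisfies
`N(k,m) ≤ C(k + ⌈(k-m)/p⌉, ⌈(k-m)/p⌉)`; in particular `N(k,0) ≤ C(k + ⌈k/p⌉, ⌈k/p⌉)`. -/
theorem branching_recurrence_bound (p : ℕ) (hp : 1 ≤ p) (N : ℕ → ℕ → ℕ)
    (h1 : ∀ k m : ℕ, (k = 0 ∨ k ≤ m) → N k m ≤ 1)
    (h2 : ∀ k m : ℕ, 1 ≤ k → m < k → N k m ≤ N (k - 1) m + N k (m + p)) :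
    (∀ k m : ℕ, N k m ≤ Nat.choose (k + (k - m + p - 1) / p) ((k - m + p - 1) / p)) ∧
    (∀ k : ℕ, N k 0 ≤ Nat.choose (k + (k + p - 1) / p) ((k + p - 1) / p)) := by
  have key : ∀ a k m : ℕ, k ≤ m + a * p → N k m ≤ Nat.choose (k + a) a := by
    intro a
    induction a with
    | zero =>
      intro k m h
      simpa using h1 k m (Or.inr (by simpa using h))
    | succ a iha =>
      intro k
      induction k with
      | zero =>
        intro m _
        simpa using h1 0 m (Or.inl rfl)
      | succ k ihk =>
        intro m h
        by_cases hm : k + 1 ≤ m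
        · exact (h1 _ _ (Or.inr hm)).trans (Nat.choose_pos (by omega))
        · have e1 := h2 (k + 1) m (by omega) (by omega)
          have e2 := ihk m (by omega)
          have e3 := iha (k + 1) (m + p) (by rw [Nat.succ_mul] at h; omega)
          have e4 := Nat.choose_succ_succ (k + 1 + a) a
          have e5 : k + (a + 1) = k + 1 + a := by omega
          rw [e5] at e2
          simp only [Nat.add_sub_cancel, Nat.succ_eq_add_one] at e1 e4
          rw [← Nat.add_assoc (k + 1) a 1]
          omega
  have main : ∀ k m : ℕ,
      N k m ≤ Nat.choose (k + (k - m + p - 1) / p) ((k - m + p - 1) / p) := by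
    intro k m
    apply key
    have d := Nat.div_add_mod (k - m + p - 1) p
    have l := Nat.mod_lt (k - m + p - 1) hp
    rw [Nat.mul_comm] at d
    omega
  exact ⟨main, fun k => by simpa using main k 0⟩
end
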